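/- Let V be a ℤ-graded vertex algebra, W = ⨁_{n∈ℕ} W_{(n)} an ℕ-graded vector space, and Y_W : V ⊗ W → W((x)) a linear map such that u_n maps W_{(k)} to W_{(k+m−n−1)} for u ∈ V_{(m)}, and Y_W(1, x) = id_W. Assume that for all u, v ∈ V and w ∈ W there exist k, l ∈ ℤ with v_n w = 0 for n ≥ k and u_n w = 0 for n ≥ l, and that for all p, q ∈ ℤ the iterate formula u_p v_q w = Σ_{i=0}^{k−q−1} Σ_{j=0}^{l} C(p−l,i) C(l,j) (u_{p−l−i+j}v)_{q+l+i−j} w (for q < k) and the residue vanishing Res_{x_0}Res_{x_2} x_0^{p−l−i} x_2^{q+i} (x_0+x_2)^l Y_W(Y(u,x_0)v, x_2)w = 0 (for i ≥ k−q) hold. Then (W, Y_W) is an ℕ-gradable weak V-module; in particular Y_W satisfies the Jacobi identity. -/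

import Mathlib

open scoped BigOperators

/-- Generalized binomial coefficient `C(a, i)` for `a : ℤ`, `i : ℕ`, valued in `ℂ`. -/
noncomputable def gb (a : ℤ) (i : ℕ) : ℂ :=
  (∏ j ∈ Finset.range i, ((a : ℂ) - (j : ℂ))) / (Nat.factorial i : ℂ)

/-- A vertex algebra, presented through the coefficient operators
`coeff u n = u_n = Res_x x^n Y(u,x)` of its vertex operator map, together with the
vacuum, truncation, creation and Borcherds (Jacobi) identity axioms. -/
structure VertexAlgebra (V : Type*) [AddCommGroup V] [Module ℂ V] where
  coeff : V → ℤ → V →ₗ[ℂ] V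
  coeff_add : ∀ (u v : V) (n : ℤ), coeff (u + v) n = coeff u n + coeff v n
  coeff_smul : ∀ (c : ℂ) (u : V) (n : ℤ), coeff (c • u) n = c • coeff u n
  vac : V
  vac_coeff_neg_one : ∀ v : V, coeff vac (-1) v = v
  vac_coeff : ∀ n : ℤ, n ≠ -1 → coeff vac n = 0
  trunc : ∀ u v : V, ∃ N : ℤ, ∀ n ≥ N, coeff u n v = 0
  creation : ∀ (u : V) (n : ℤ), 0 ≤ n → coeff u n vac = 0
  create_neg_one : ∀ u : V, coeff u (-1) vac = u
  borcherds : ∀ (u v w : V) (p q r : ℤ),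
    (∑ᶠ i : ℕ, gb p i • coeff (coeff u (r + i) v) (p + q - i) w) =
    ∑ᶠ i : ℕ, ((-1 : ℂ) ^ i * gb r i) •
      (coeff u (p + r - i) (coeff v (q + i) w)
        - ((-1 : ℂ) ^ r) • coeff v (q + r - i) (coeff u (p + i) w))

/-- A module for a vertex algebra, presented through the coefficient operators
`Yw u n = u_n = Res_x x^n Y_W(u,x)`, with weak associativity (in coefficient form:
for every `a b : ℤ`, the coefficient of `x₀^a x₂^b` in
`(x₀+x₂)^l Y_W(u,x₀+x₂) Y_W(v,x₂) w` equals that in `(x₀+x₂)^l Y_W(Y(u,x₀)v,x₂) w`,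
where `(x₀+x₂)^n` is expanded in nonnegative powers of `x₂`) as the main axiom. -/
structure VAModule {V : Type*} [AddCommGroup V] [Module ℂ V] (A : VertexAlgebra V)
    (W : Type*) [AddCommGroup W] [Module ℂ W] where
  Yw : V → ℤ → W →ₗ[ℂ] W
  Yw_add : ∀ (u v : V) (n : ℤ), Yw (u + v) n = Yw u n + Yw v n
  Yw_smul : ∀ (c : ℂ) (u : V) (n : ℤ), Yw (c • u) n = c • Yw u n
  vac_neg_one : ∀ w : W, Yw A.vac (-1) w = w
  vac_ne : ∀ n : ℤ, n ≠ -1 → Yw A.vac n = 0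
  trunc : ∀ (u : V) (w : W), ∃ N : ℤ, ∀ n ≥ N, Yw u n w = 0
  weak_assoc : ∀ (u v : V) (w : W) (l : ℕ),
    (∀ n : ℤ, (l : ℤ) ≤ n → Yw u n w = 0) →
    ∀ a b : ℤ,
      (∑ᶠ j : ℕ, gb (a + j) j • Yw u ((l : ℤ) - 1 - a - j) (Yw v ((j : ℤ) - b - 1) w)) =
      ∑ j ∈ Finset.range (l + 1),
        gb l j • Yw (A.coeff u ((l : ℤ) - j - a - 1) v) ((j : ℤ) - b - 1) w

/-- A ℤ-graded vertex algebra: a vertex algebra with an internal direct sum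
decomposition `V = ⨁_{n∈ℤ} V_(n)` compatible with the vertex operator coefficients:
`u_n` maps `V_(k)` to `V_(k + m - n - 1)` for `u ∈ V_(m)`. -/
structure GradedVA (V : Type*) [AddCommGroup V] [Module ℂ V] extends VertexAlgebra V where
  gr : ℤ → Submodule ℂ V
  internal : DirectSum.IsInternal gr
  vac_mem : vac ∈ gr 0
  coeff_grade : ∀ {m : ℤ} {u : V}, u ∈ gr m → ∀ (n : ℤ) {k : ℤ} {v : V}, v ∈ gr k →
    coeff u n v ∈ gr (k + m - n - 1)

/-- An ℕ-graded vertex algebra: `V_(n) = 0` for `n < 0`. -/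
def GradedVA.IsNNGraded {V : Type*} [AddCommGroup V] [Module ℂ V] (A : GradedVA V) : Prop :=
  ∀ n : ℤ, n < 0 → A.gr n = ⊥

/-- The property that a family of coefficient operators `Yw u n = u_n` defines a weak
module structure over the vertex algebra `A` on `W`: linearity in `u`, lower
truncation, the vacuum property `Y_W(1,x) = id`, and the Borcherds (Jacobi) identity. -/
def IsWeakModule {V W : Type*} [AddCommGroup V] [Module ℂ V] [AddCommGroup W] [Module ℂ W]
    (A : VertexAlgebra V) (Yw : V → ℤ → W →ₗ[ℂ] W) : Prop :=
  (∀ (u v : V) (n : ℤ), Yw (u + v) n = Yw u n + Yw v n) ∧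
  (∀ (c : ℂ) (u : V) (n : ℤ), Yw (c • u) n = c • Yw u n) ∧
  (∀ (u : V) (w : W), ∃ N : ℤ, ∀ n ≥ N, Yw u n w = 0) ∧
  (∀ w : W, Yw A.vac (-1) w = w) ∧
  (∀ n : ℤ, n ≠ -1 → Yw A.vac n = 0) ∧
  (∀ (u v : V) (w : W) (p q r : ℤ),
    (∑ᶠ i : ℕ, gb p i • Yw (A.coeff u (r + i) v) (p + q - i) w) =
    ∑ᶠ i : ℕ, ((-1 : ℂ) ^ i * gb r i) •
      (Yw u (p + r - i) (Yw v (q + i) w)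
        - ((-1 : ℂ) ^ r) • Yw v (q + r - i) (Yw u (p + i) w)))

/-- An ℕ-grading on a weak module: an internal direct sum `W = ⨁ W_(n)` with
`W_(n) = 0` for `n < 0` and `u_n : W_(k) → W_(k + m - n - 1)` for `u ∈ V_(m)`. -/
def IsNNGradedModule {V W : Type*} [AddCommGroup V] [Module ℂ V] [AddCommGroup W]
    [Module ℂ W] (A : GradedVA V) (Yw : V → ℤ → W →ₗ[ℂ] W)
    (wgr : ℤ → Submodule ℂ W) : Prop :=
  DirectSum.IsInternal wgr ∧ (∀ n : ℤ, n < 0 → wgr n = ⊥) ∧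
  (∀ {m : ℤ} {u : V}, u ∈ A.gr m → ∀ (n : ℤ) {k : ℤ} {w : W}, w ∈ wgr k →
    Yw u n w ∈ wgr (k + m - n - 1))

/-!
Let `J(p, q, r)` be the difference of the two sides of the Jacobi identity on `w`, in degree
`(p, q, r)`. It satisfies `J(p + 1, q, r) = J(p, q + 1, r) + J(p, q, r + 1)`, so `J = 0` as soon
as `J` vanishes both for large `p` and for large `q`. Vanishing for large `p` is weak
associativity; it follows from the iterate formula and the residue vanishing by inverting the
binomial transform `∑ᵢ C(p - l, i)`. Weak associativity with `v = 1` gives the derivative property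
of `Y_W`, which transports the skew symmetry of `V` to the iterate term of the Jacobi identity on
`W`. Hence `J` is skew-symmetric under the exchange of `(u, p)` and `(v, q)`, and weak
associativity for `(v, u)` gives the vanishing for large `q`.
-/

section Binomial

theorem gb_eq_ringChoose (a : ℤ) (i : ℕ) : gb a i = Ring.choose (a : ℂ) i := by
  rw [Ring.choose_eq_smul, ← Polynomial.aeval_eq_smeval, ← Polynomial.eval_map_algebraMap,
    descPochhammer_map, descPochhammer_eval_eq_prod_range, smul_eq_mul, gb, div_eq_inv_mul]

theorem gb_zero_right (a : ℤ) : gb a 0 = 1 := by simp [gb]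

theorem gb_natCast (l j : ℕ) : gb l j = l.choose j := by
  rw [gb_eq_ringChoose, Int.cast_natCast, Ring.choose_natCast]

theorem gb_neg_one (i : ℕ) : gb (-1) i = (-1) ^ i := by
  rw [gb_eq_ringChoose, Int.cast_neg, Int.cast_one, Ring.choose_neg, add_sub_cancel_left,
    Ring.choose_natCast, Nat.choose_self]
  simp [Units.smul_def, Int.negOnePow_def]

theorem gb_succ_succ (a : ℤ) (i : ℕ) : gb (a + 1) (i + 1) = gb a i + gb a (i + 1) := by
  simp only [gb_eq_ringChoose, Int.cast_add, Int.cast_one, Ring.choose_succ_succ]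

theorem gb_mul_gb_sub (a : ℤ) (n i : ℕ) :
    gb a n * gb (a - n) i = (n + i).choose n * gb a (n + i) := by
  have h := Ring.choose_smul_choose (a : ℂ) (Nat.le_add_right n i)
  rw [nsmul_eq_mul, Nat.add_sub_cancel_left] at h
  simp only [gb_eq_ringChoose, Int.cast_sub, Int.cast_natCast, h]

end Binomial

section BinomSum

variable {M : Type*} [AddCommGroup M]

theorem hasFiniteSupport_iff_exists_forall_ge {f : ℕ → M} :
    f.HasFiniteSupport ↔ ∃ N, ∀ i ≥ N, f i = 0 := by
  rw [← Filter.eventually_atTop, ← Nat.cofinite_eq_atTop, Filter.eventually_cofinite]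
  rfl

theorem finsum_eq_sum_range {f : ℕ → M} {N : ℕ} (hf : ∀ i ≥ N, f i = 0) :
    ∑ᶠ i, f i = ∑ i ∈ Finset.range N, f i := by
  refine finsum_eq_sum_of_support_subset f fun i hi => ?_
  contrapose! hi
  simpa using hf i (by simpa using hi)

variable [Module ℂ M]

/-- The binomial transform `∑ᵢ C(s, i) f i` of a finitely supported sequence, that is, the value
at `0` of `(1 + S) ^ s f` for the shift operator `S`. -/
noncomputable def binomSum (s : ℤ) (f : ℕ → M) : M :=
  ∑ᶠ i, gb s i • f i

theorem binomSum_eq_sum_range (s : ℤ) {f : ℕ → M} {N : ℕ} (hf : ∀ i ≥ N, f i = 0) :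
    binomSum s f = ∑ i ∈ Finset.range N, gb s i • f i :=
  finsum_eq_sum_range fun i hi => by rw [hf i hi, smul_zero]

theorem binomSum_natCast (l : ℕ) (f : ℕ → M) :
    binomSum l f = ∑ i ∈ Finset.range (l + 1), (l.choose i : ℂ) • f i := by
  simp only [binomSum, gb_natCast]
  refine finsum_eq_sum_range fun i hi => ?_
  rw [Nat.choose_eq_zero_of_lt hi, Nat.cast_zero, zero_smul]

theorem binomSum_eq_head (s : ℤ) {f : ℕ → M} (hf : ∀ i ≥ 1, f i = 0) : binomSum s f = f 0 := by
  rw [binomSum_eq_sum_range s hf, Finset.sum_range_one, gb_zero_right, one_smul]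

theorem binomSum_eq_zero (s : ℤ) {f : ℕ → M} (hf : ∀ i, f i = 0) : binomSum s f = 0 := by
  simp [binomSum, hf]

theorem binomSum_zero_left (f : ℕ → M) : binomSum 0 f = f 0 := by
  simpa using binomSum_natCast 0 f

theorem binomSum_add (s : ℤ) {f g : ℕ → M} (hf : f.HasFiniteSupport) (hg : g.HasFiniteSupport) :
    binomSum s (fun i => f i + g i) = binomSum s f + binomSum s g := by
  simp only [binomSum, smul_add]
  exact finsum_add_distrib (hf.smul_right _) (hg.smul_right _)

theorem binomSum_smul (s : ℤ) (c : ℂ) (f : ℕ → M) :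
    binomSum s (fun i => c • f i) = c • binomSum s f := by
  simp only [binomSum, smul_finsum, smul_comm c]

theorem map_binomSum {N : Type*} [AddCommGroup N] [Module ℂ N] (φ : M →ₗ[ℂ] N) (s : ℤ)
    {f : ℕ → M} (hf : f.HasFiniteSupport) : φ (binomSum s f) = binomSum s (fun i => φ (f i)) := by
  simp only [binomSum, ← map_smul]
  exact φ.toAddMonoidHom.map_finsum (hf.smul_right _)

theorem binomSum_add_one (s : ℤ) {f : ℕ → M} (hf : f.HasFiniteSupport) :
    binomSum (s + 1) f = binomSum s f + binomSum s (fun i => f (i + 1)) := by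
  obtain ⟨N, hN⟩ := hasFiniteSupport_iff_exists_forall_ge.1 hf
  have hN' : ∀ i ≥ N + 1, f i = 0 := fun i hi => hN i (by omega)
  rw [binomSum_eq_sum_range (s + 1) hN', binomSum_eq_sum_range s hN',
    binomSum_eq_sum_range s fun i (hi : i ≥ N) => hN (i + 1) (by omega),
    Finset.sum_range_succ', Finset.sum_range_succ' (fun i => gb s i • f i)]
  simp only [gb_succ_succ, add_smul, Finset.sum_add_distrib, gb_zero_right]
  abel

/-- The trinomial identity `C(s, n) C(s - n, i) = C(n + i, n) C(s, n + i)` reduces the claim to the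
vanishing of the alternating row sums of Pascal's triangle. -/
theorem binomSum_alternating_binomSum (s : ℤ) {g : ℕ → M} (hg : g.HasFiniteSupport) :
    binomSum s (fun n => (-1 : ℂ) ^ n • binomSum (s - n) (fun i => g (n + i))) = g 0 := by
  obtain ⟨N, hN⟩ := hasFiniteSupport_iff_exists_forall_ge.1 hg
  have alternating (m : ℕ) :
      ∑ n ∈ Finset.range (m + 1), (-1 : ℂ) ^ n * m.choose n = if m = 0 then 1 else 0 := by
    exact_mod_cast Int.alternating_sum_range_choose (n := m)
  have inner (n : ℕ) : binomSum (s - n) (fun i => g (n + i)) =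
      ∑ i ∈ Finset.range (N + 1 - n), gb (s - n) i • g (n + i) :=
    binomSum_eq_sum_range _ fun i hi => hN _ (by omega)
  calc binomSum s (fun n => (-1 : ℂ) ^ n • binomSum (s - n) (fun i => g (n + i)))
    _ = ∑ n ∈ Finset.range (N + 1), ∑ i ∈ Finset.range (N + 1 - n),
          ((-1 : ℂ) ^ n * ((n + i).choose n * gb s (n + i))) • g (n + i) := by
      rw [binomSum_eq_sum_range s (N := N + 1) fun n hn => by
        rw [binomSum_eq_zero _ fun i => hN _ (by omega), smul_zero]]
      simp only [inner, Finset.smul_sum, smul_smul, ← gb_mul_gb_sub]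
      simp only [mul_left_comm]
    _ = ∑ m ∈ Finset.range (N + 1), ∑ n ∈ Finset.range (m + 1),
          ((-1 : ℂ) ^ n * m.choose n) • gb s m • g m := by
      rw [← Finset.sum_range_diag_flip (N + 1) fun n i =>
        ((-1 : ℂ) ^ n * ((n + i).choose n * gb s (n + i))) • g (n + i)]
      refine Finset.sum_congr rfl fun m _ => Finset.sum_congr rfl fun n hn => ?_
      rw [Nat.add_sub_cancel' (Finset.mem_range_succ_iff.1 hn), smul_smul, mul_assoc]
    _ = g 0 := by
      simp [← Finset.sum_smul, alternating, gb_zero_right]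

end BinomSum

section PascalRecurrence

variable {M : Type*} [AddCommGroup M]

/-- The recurrence satisfied by `K p q r = Res x₁ᵖ x₂ᵠ x₀ʳ F` for a formal series `F` with
`x₁ F = (x₂ + x₀) F`, such as the three delta-function terms of the Jacobi identity. -/
def PascalRecurrence (K : ℤ → ℤ → ℤ → M) : Prop :=
  ∀ p q r, K (p + 1) q r = K p (q + 1) r + K p q (r + 1)

namespace PascalRecurrence

variable {K L : ℤ → ℤ → ℤ → M}

theorem add (hK : PascalRecurrence K) (hL : PascalRecurrence L) :
    PascalRecurrence fun p q r => K p q r + L p q r := by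
  intro p q r
  dsimp only
  rw [hK, hL]
  abel

theorem sub (hK : PascalRecurrence K) (hL : PascalRecurrence L) :
    PascalRecurrence fun p q r => K p q r - L p q r := by
  intro p q r
  dsimp only
  rw [hK, hL]
  abel

theorem swap_right (hK : PascalRecurrence K) : PascalRecurrence fun p q r => K p r q :=
  fun p q r => (hK p r q).trans (add_comm _ _)

theorem alternating_swap_left [Module ℂ M] (hK : PascalRecurrence K) :
    PascalRecurrence fun p q r => (-1 : ℂ) ^ r • K q p r := by
  intro p q r
  dsimp only
  rw [hK q p r, zpow_add_one₀ (by norm_num)]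
  module

theorem eq_zero_of_fst_ge (hK : PascalRecurrence K) {l : ℤ} (hl : ∀ q r, K l q r = 0) :
    ∀ p ≥ l, ∀ q r, K p q r = 0 := by
  intro p hp
  induction p, hp using Int.leInduction with
  | base => exact hl
  | succ p _ ih => intro q r; rw [hK, ih, ih, add_zero]

theorem eq_zero_of_thd_ge (hK : PascalRecurrence K) {N : ℤ} (hN : ∀ p q, K p q N = 0) :
    ∀ r ≥ N, ∀ p q, K p q r = 0 := by
  intro r hr
  induction r, hr using Int.leInduction with
  | base => exact hN
  | succ r _ ih => intro p q; simpa only [ih, zero_add, eq_comm] using hK p q r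

theorem eq_zero_of_fst_of_snd (hK : PascalRecurrence K) {l k : ℤ}
    (hl : ∀ p ≥ l, ∀ q r, K p q r = 0) (hk : ∀ q ≥ k, ∀ p r, K p q r = 0) (p q r : ℤ) :
    K p q r = 0 := by
  have descend : ∀ s ≤ l + k, ∀ p q r, s ≤ p + q → K p q r = 0 := by
    intro s hs
    induction s, hs using Int.leInductionDown with
    | base =>
      intro p q r hpq
      rcases le_or_gt l p with hp | hp
      · exact hl p hp q r
      · exact hk q (by omega) p r
    | pred s _ ih =>
      intro p q r hpq
      have h := hK p q (r - 1)
      rw [ih (p + 1) q _ (by omega), ih p (q + 1) _ (by omega), zero_add, sub_add_cancel] at h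
      exact h.symm
  exact descend (min (l + k) (p + q)) (min_le_left _ _) p q r (min_le_right _ _)

theorem eq_zero_of_fst_of_thd (hK : PascalRecurrence K) {l N : ℤ}
    (hl : ∀ p ≥ l, ∀ q r, K p q r = 0) (hN : ∀ r ≥ N, ∀ p q, K p q r = 0) (p q r : ℤ) :
    K p q r = 0 :=
  hK.swap_right.eq_zero_of_fst_of_snd (fun p hp q r => hl p hp r q) hN p r q

/-- Once `K` vanishes at `r + 1`, the recurrence says that `K p q r` depends only on `p + q`. -/
theorem eq_zero_of_thd_of_snd_zero (hK : PascalRecurrence K) {N : ℤ}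
    (hN : ∀ r ≥ N, ∀ p q, K p q r = 0) (h0 : ∀ p r, K p 0 r = 0) (p q r : ℤ) : K p q r = 0 := by
  have descend : ∀ s ≤ N, ∀ r ≥ s, ∀ p q, K p q r = 0 := by
    intro s hs
    induction s, hs using Int.leInductionDown with
    | base => exact hN
    | pred s _ ih =>
      intro r hr p q
      have shift (p q : ℤ) : K (p + 1) q r = K p (q + 1) r := by
        rw [hK, ih (r + 1) (by omega), add_zero]
      induction q using Int.induction_on generalizing p with
      | zero => exact h0 p r
      | succ q ihq => rw [← shift, ihq]
      | pred q ihq => rw [← sub_add_cancel p 1, shift, sub_add_cancel, ihq]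
  exact descend (min N r) (min_le_left _ _) r (min_le_right _ _) p q

end PascalRecurrence

end PascalRecurrence

section VertexOperatorMap

variable {V W : Type*} [AddCommGroup V] [Module ℂ V] [AddCommGroup W] [Module ℂ W]

/-- The family `Yw u n` consists of the coefficients of a linear map `V ⊗ W → W((x))`: it is linear
in `u` and, on each vector of `W`, lower truncated. -/
structure IsVertexOperatorMap (Yw : V → ℤ → W →ₗ[ℂ] W) : Prop where
  map_add : ∀ (u v : V) (n : ℤ), Yw (u + v) n = Yw u n + Yw v n
  map_smul : ∀ (c : ℂ) (u : V) (n : ℤ), Yw (c • u) n = c • Yw u n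
  trunc : ∀ (u : V) (w : W), ∃ N : ℤ, ∀ n ≥ N, Yw u n w = 0

/-- The vacuum property `Y_W(1, x) = id`, coefficient by coefficient. -/
structure HasVacuumProperty (A : VertexAlgebra V) (Yw : V → ℤ → W →ₗ[ℂ] W) : Prop where
  neg_one : ∀ w : W, Yw A.vac (-1) w = w
  of_ne : ∀ n : ℤ, n ≠ -1 → Yw A.vac n = 0

namespace IsVertexOperatorMap

variable {Yw : V → ℤ → W →ₗ[ℂ] W}

/-- The linear map `u ↦ u_n w`. -/
def applyₗ (hY : IsVertexOperatorMap Yw) (n : ℤ) (w : W) : V →ₗ[ℂ] W where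
  toFun u := Yw u n w
  map_add' u v := by rw [hY.map_add, LinearMap.add_apply]
  map_smul' c u := by rw [hY.map_smul, LinearMap.smul_apply, RingHom.id_apply]

theorem map_zero_apply (hY : IsVertexOperatorMap Yw) (n : ℤ) (w : W) : Yw 0 n w = 0 :=
  map_zero (hY.applyₗ n w)

theorem hasFiniteSupport_comp (hY : IsVertexOperatorMap Yw) (u v : V) (w : W) (q : ℤ) (m : ℕ → ℤ) :
    (fun i : ℕ => (-1 : ℂ) ^ i • Yw u (m i) (Yw v (q + i) w)).HasFiniteSupport := by
  obtain ⟨N, hN⟩ := hY.trunc v w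
  refine hasFiniteSupport_iff_exists_forall_ge.2 ⟨(N - q).toNat, fun i hi => ?_⟩
  rw [hN _ (by omega), map_zero, smul_zero]

end IsVertexOperatorMap

namespace VertexAlgebra

theorem isVertexOperatorMap_coeff (A : VertexAlgebra V) : IsVertexOperatorMap A.coeff :=
  ⟨A.coeff_add, A.coeff_smul, A.trunc⟩

theorem hasFiniteSupport_coeff (A : VertexAlgebra V) (u v : V) (r : ℤ) :
    (fun i : ℕ => A.coeff u (r + i) v).HasFiniteSupport := by
  obtain ⟨N, hN⟩ := A.trunc u v
  exact hasFiniteSupport_iff_exists_forall_ge.2 ⟨(N - r).toNat, fun i hi => hN _ (by omega)⟩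

end VertexAlgebra

theorem IsVertexOperatorMap.hasFiniteSupport_iterate {Yw : V → ℤ → W →ₗ[ℂ] W}
    (hY : IsVertexOperatorMap Yw) (A : VertexAlgebra V) (u v : V) (w : W) (r : ℤ) (m : ℕ → ℤ) :
    (fun i : ℕ => Yw (A.coeff u (r + i) v) (m i) w).HasFiniteSupport := by
  refine (A.hasFiniteSupport_coeff u v r).subset fun i hi => ?_
  contrapose! hi
  simp only [Function.mem_support, not_not] at hi ⊢
  rw [hi, hY.map_zero_apply]

end VertexOperatorMap

section JacobiIdentity

variable {V W : Type*} [AddCommGroup W] [Module ℂ W]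

/-- The coefficient `Res x₁ᵖ x₂ᵠ x₀ʳ` of `x₀⁻¹ δ((x₁ - x₂) / x₀) Y_W(u, x₁) Y_W(v, x₂) w`, the
first product term of the Jacobi identity. The second one is `(-1)ʳ` times the coefficient with
the roles of `(u, p)` and `(v, q)` exchanged. -/
noncomputable def productCoeff (Yw : V → ℤ → W →ₗ[ℂ] W) (u v : V) (w : W) (p q r : ℤ) : W :=
  binomSum r fun i => (-1 : ℂ) ^ i • Yw u (p + r - i) (Yw v (q + i) w)

theorem productCoeff_eq_zero {Yw : V → ℤ → W →ₗ[ℂ] W} {v : V} {w : W} {q : ℤ}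
    (hv : ∀ n ≥ q, Yw v n w = 0) (u : V) (p r : ℤ) : productCoeff Yw u v w p q r = 0 :=
  binomSum_eq_zero r fun i => by rw [hv _ (by omega), map_zero, smul_zero]

theorem productCoeff_eq_comp {Yw : V → ℤ → W →ₗ[ℂ] W} {v : V} {w : W} {q : ℤ}
    (hv : ∀ n > q, Yw v n w = 0) (u : V) (p r : ℤ) :
    productCoeff Yw u v w p q r = Yw u (p + r) (Yw v q w) := by
  rw [productCoeff, binomSum_eq_head r fun i hi => by rw [hv _ (by omega), map_zero, smul_zero]]
  simp

variable [AddCommGroup V] [Module ℂ V]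

/-- The coefficient `Res x₁ᵖ x₂ᵠ x₀ʳ` of `x₂⁻¹ δ((x₁ - x₀) / x₂) Y_W(Y(u, x₀) v, x₂) w`, the
iterate term of the Jacobi identity. -/
noncomputable def iterateCoeff (A : VertexAlgebra V) (Yw : V → ℤ → W →ₗ[ℂ] W) (u v : V) (w : W)
    (p q r : ℤ) : W :=
  binomSum p fun i => Yw (A.coeff u (r + i) v) (p + q - i) w

/-- The difference of the two sides of the Jacobi identity, on `w`, in degree `(p, q, r)`. -/
noncomputable def jacobiDefect (A : VertexAlgebra V) (Yw : V → ℤ → W →ₗ[ℂ] W) (u v : V) (w : W)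
    (p q r : ℤ) : W :=
  iterateCoeff A Yw u v w p q r -
    (productCoeff Yw u v w p q r - (-1 : ℂ) ^ r • productCoeff Yw v u w q p r)

variable {A : VertexAlgebra V} {Yw : V → ℤ → W →ₗ[ℂ] W}

theorem jacobiDefect_eq_zero_iff (hY : IsVertexOperatorMap Yw) (u v : V) (w : W) (p q r : ℤ) :
    jacobiDefect A Yw u v w p q r = 0 ↔
      (∑ᶠ i : ℕ, gb p i • Yw (A.coeff u (r + i) v) (p + q - i) w) =
      ∑ᶠ i : ℕ, ((-1 : ℂ) ^ i * gb r i) •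
        (Yw u (p + r - i) (Yw v (q + i) w)
          - ((-1 : ℂ) ^ r) • Yw v (q + r - i) (Yw u (p + i) w)) := by
  have product_side :
      productCoeff Yw u v w p q r - (-1 : ℂ) ^ r • productCoeff Yw v u w q p r =
      ∑ᶠ i : ℕ, ((-1 : ℂ) ^ i * gb r i) •
        (Yw u (p + r - i) (Yw v (q + i) w)
          - ((-1 : ℂ) ^ r) • Yw v (q + r - i) (Yw u (p + i) w)) := by
    have hfin : (fun i : ℕ => -(-1 : ℂ) ^ r •
        (-1 : ℂ) ^ i • Yw v (q + r - i) (Yw u (p + i) w)).HasFiniteSupport :=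
      (hY.hasFiniteSupport_comp v u w p _).smul_right fun _ => -(-1 : ℂ) ^ r
    rw [sub_eq_add_neg, ← neg_smul, productCoeff, productCoeff, ← binomSum_smul,
      ← binomSum_add r (hY.hasFiniteSupport_comp u v w q _) hfin]
    exact finsum_congr fun i => by module
  rw [jacobiDefect, sub_eq_zero, product_side]
  rfl

theorem VertexAlgebra.jacobiDefect_coeff (A : VertexAlgebra V) (u v w : V) (p q r : ℤ) :
    jacobiDefect A A.coeff u v w p q r = 0 :=
  (jacobiDefect_eq_zero_iff A.isVertexOperatorMap_coeff u v w p q r).2 (A.borcherds u v w p q r)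

theorem pascalRecurrence_iterateCoeff (hY : IsVertexOperatorMap Yw) (A : VertexAlgebra V)
    (u v : V) (w : W) : PascalRecurrence (iterateCoeff A Yw u v w) := by
  intro p q r
  unfold iterateCoeff
  rw [binomSum_add_one p (hY.hasFiniteSupport_iterate A u v w r _)]
  congr! 5 <;> push_cast <;> ring_nf

theorem pascalRecurrence_productCoeff (hY : IsVertexOperatorMap Yw) (u v : V) (w : W) :
    PascalRecurrence (productCoeff Yw u v w) := by
  intro p q r
  have shift : binomSum r (fun i : ℕ =>
      (-1 : ℂ) ^ (i + 1) • Yw u (p + (r + 1) - (i + 1 : ℕ)) (Yw v (q + (i + 1 : ℕ)) w)) =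
      -productCoeff Yw u v w p (q + 1) r := by
    rw [productCoeff, ← neg_one_smul ℂ (binomSum _ _), ← binomSum_smul]
    congr! 2 with i
    rw [pow_succ', mul_smul]
    push_cast
    ring_nf
  have head : binomSum r (fun i : ℕ =>
      (-1 : ℂ) ^ i • Yw u (p + (r + 1) - i) (Yw v (q + i) w)) =
      productCoeff Yw u v w (p + 1) q r := by
    rw [productCoeff, add_right_comm, add_assoc]
  have h : productCoeff Yw u v w p q (r + 1) = _ :=
    binomSum_add_one r (hY.hasFiniteSupport_comp u v w q _)
  rw [h, shift, head]
  abel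

theorem pascalRecurrence_jacobiDefect (hY : IsVertexOperatorMap Yw) (A : VertexAlgebra V)
    (u v : V) (w : W) : PascalRecurrence (jacobiDefect A Yw u v w) :=
  (pascalRecurrence_iterateCoeff hY A u v w).sub <| (pascalRecurrence_productCoeff hY u v w).sub
    (pascalRecurrence_productCoeff hY v u w).alternating_swap_left

theorem iterateCoeff_eq_zero (hY : IsVertexOperatorMap Yw) {u v : V} {r : ℤ}
    (huv : ∀ n ≥ r, A.coeff u n v = 0) (w : W) (p q : ℤ) : iterateCoeff A Yw u v w p q r = 0 :=
  binomSum_eq_zero p fun i => by rw [huv _ (by omega), hY.map_zero_apply]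

theorem jacobiDefect_add_left (hY : IsVertexOperatorMap Yw) (A : VertexAlgebra V) (u u' v : V)
    (w : W) (p q r : ℤ) :
    jacobiDefect A Yw (u + u') v w p q r =
      jacobiDefect A Yw u v w p q r + jacobiDefect A Yw u' v w p q r := by
  have iterate : iterateCoeff A Yw (u + u') v w p q r =
      iterateCoeff A Yw u v w p q r + iterateCoeff A Yw u' v w p q r := by
    simp only [iterateCoeff, A.coeff_add, hY.map_add, LinearMap.add_apply]
    exact binomSum_add p (hY.hasFiniteSupport_iterate A u v w r _)
      (hY.hasFiniteSupport_iterate A u' v w r _)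
  have product : productCoeff Yw (u + u') v w p q r =
      productCoeff Yw u v w p q r + productCoeff Yw u' v w p q r := by
    simp only [productCoeff, hY.map_add, LinearMap.add_apply, smul_add]
    exact binomSum_add r (hY.hasFiniteSupport_comp u v w q _) (hY.hasFiniteSupport_comp u' v w q _)
  have product_swap : productCoeff Yw v (u + u') w q p r =
      productCoeff Yw v u w q p r + productCoeff Yw v u' w q p r := by
    simp only [productCoeff, hY.map_add, LinearMap.add_apply, map_add, smul_add]
    exact binomSum_add r (hY.hasFiniteSupport_comp v u w p _) (hY.hasFiniteSupport_comp v u' w p _)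
  rw [jacobiDefect, iterate, product, product_swap, jacobiDefect, jacobiDefect]
  module

theorem jacobiDefect_zero_right (A : VertexAlgebra V) (Yw : V → ℤ → W →ₗ[ℂ] W) (u v : V)
    (p q r : ℤ) : jacobiDefect A Yw u v 0 p q r = 0 := by
  simp [jacobiDefect, iterateCoeff, productCoeff, binomSum]

end JacobiIdentity

section WeakAssociativity

variable {V W : Type*} [AddCommGroup V] [Module ℂ V] [AddCommGroup W] [Module ℂ W]

/-- Weak associativity of `Yw` for `u`, `v` on `w`: multiplication by a large power of `x₁`
annihilates the defect of the Jacobi identity. -/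
def IsWeaklyAssociative (A : VertexAlgebra V) (Yw : V → ℤ → W →ₗ[ℂ] W) (u v : V) (w : W) : Prop :=
  ∃ l : ℤ, ∀ p ≥ l, ∀ q r, jacobiDefect A Yw u v w p q r = 0

variable {A : VertexAlgebra V} {Yw : V → ℤ → W →ₗ[ℂ] W}

theorem IsWeaklyAssociative.of_add_left (hY : IsVertexOperatorMap Yw) {u u' v : V} {w : W}
    (h : IsWeaklyAssociative A Yw (u + u') v w) (h' : IsWeaklyAssociative A Yw u' v w) :
    IsWeaklyAssociative A Yw u v w := by
  obtain ⟨l, hl⟩ := h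
  obtain ⟨l', hl'⟩ := h'
  refine ⟨max l l', fun p hp q r => ?_⟩
  have h := hl p (le_trans (le_max_left l l') hp) q r
  rwa [jacobiDefect_add_left hY, hl' p (le_trans (le_max_right l l') hp), add_zero] at h

theorem iterateCoeff_natCast (A : VertexAlgebra V) (Yw : V → ℤ → W →ₗ[ℂ] W) (u v : V) (w : W)
    (l : ℕ) (q r : ℤ) :
    iterateCoeff A Yw u v w l q r =
      ∑ j ∈ Finset.range (l + 1), gb l j • Yw (A.coeff u (r + j) v) (l + q - j) w := by
  simp only [gb_natCast]
  exact binomSum_natCast l _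

theorem iterateCoeff_natCast_reflect (A : VertexAlgebra V) (Yw : V → ℤ → W →ₗ[ℂ] W) (u v : V)
    (w : W) (l : ℕ) (q r : ℤ) :
    iterateCoeff A Yw u v w l q r =
      ∑ j ∈ Finset.range (l + 1), gb l j • Yw (A.coeff u (l + r - j) v) (q + j) w := by
  rw [iterateCoeff_natCast, ← Finset.sum_range_reflect]
  refine Finset.sum_congr rfl fun j hj => ?_
  have hj : j ≤ l := Finset.mem_range_succ_iff.1 hj
  rw [Nat.add_sub_cancel, gb_natCast, gb_natCast, Nat.choose_symm hj]
  push_cast [Nat.cast_sub hj]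
  ring_nf

theorem productCoeff_eq_iterateCoeff {u v : V} {w : W} {k : ℤ} {l : ℕ}
    (hvanish : ∀ q ≥ k, ∀ r, iterateCoeff A Yw u v w l q r = 0)
    (hcomp : ∀ p q, Yw u p (Yw v q w) =
      binomSum (p - l) fun i => iterateCoeff A Yw u v w l (q + i) (p - l - i)) (q r : ℤ) :
    productCoeff Yw u v w l q r = iterateCoeff A Yw u v w l q r := by
  have hfin : (fun n : ℕ => iterateCoeff A Yw u v w l (q + n) (r - n)).HasFiniteSupport :=
    hasFiniteSupport_iff_exists_forall_ge.2 ⟨(k - q).toNat, fun n hn => hvanish _ (by omega) _⟩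
  have h := binomSum_alternating_binomSum r hfin
  simp only [Nat.cast_zero, add_zero, sub_zero] at h
  rw [← h, productCoeff]
  congr! 3 with n
  rw [hcomp]
  push_cast
  ring_nf

/-- The iterate formula and the residue vanishing for `u`, `v` on `w`, where `k` and `l` are orders
of truncation of `v` and `u` on `w`. As `(x₀ + x₂)ˡ` is expanded up to degree `l.toNat` only, the
formulas have their intended meaning for `0 ≤ l`. -/
structure HasIterateFormula (A : VertexAlgebra V) (Yw : V → ℤ → W →ₗ[ℂ] W) (u v : V) (w : W)
    (k l : ℤ) : Prop where
  trunc_right : ∀ n : ℤ, k ≤ n → Yw v n w = 0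
  trunc_left : ∀ n : ℤ, l ≤ n → Yw u n w = 0
  comp_eq : ∀ p q : ℤ, q < k →
    Yw u p (Yw v q w) =
      ∑ i ∈ Finset.range (k - q).toNat, ∑ j ∈ Finset.range (l.toNat + 1),
        (gb (p - l) i * gb l j) • Yw (A.coeff u (p - l - i + j) v) (q + l + i - j) w
  residue_eq_zero : ∀ p q i : ℤ, k - q ≤ i →
    ∑ j ∈ Finset.range (l.toNat + 1),
      gb l j • Yw (A.coeff u (p - i - j) v) (q + i + j) w = 0

theorem HasIterateFormula.isWeaklyAssociative (hY : IsVertexOperatorMap Yw) {u v : V} {w : W}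
    {k : ℤ} {l : ℕ} (h : HasIterateFormula A Yw u v w k l) : IsWeaklyAssociative A Yw u v w := by
  have hvanish : ∀ q ≥ k, ∀ r, iterateCoeff A Yw u v w l q r = 0 := by
    intro q hq r
    simpa only [iterateCoeff_natCast_reflect, Int.toNat_natCast, sub_zero, add_zero] using
      h.residue_eq_zero (l + r) q 0 (by omega)
  have hcomp (p q : ℤ) : Yw u p (Yw v q w) =
      binomSum (p - l) fun i => iterateCoeff A Yw u v w l (q + i) (p - l - i) := by
    rw [binomSum_eq_sum_range _ fun i (hi : i ≥ (k - q).toNat) => hvanish _ (by omega) _]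
    rcases lt_or_ge q k with hq | hq
    · simp only [h.comp_eq p q hq, Int.toNat_natCast, iterateCoeff_natCast, Finset.smul_sum,
        smul_smul]
      ring_nf
    · rw [h.trunc_right q hq, map_zero, Int.toNat_of_nonpos (by omega), Finset.sum_range_zero]
  refine ⟨l, (pascalRecurrence_jacobiDefect hY A u v w).eq_zero_of_fst_ge fun q r => ?_⟩
  rw [jacobiDefect, productCoeff_eq_iterateCoeff hvanish hcomp, productCoeff_eq_zero h.trunc_left,
    smul_zero, sub_zero, sub_self]

theorem isWeaklyAssociative_of_apply_neg_one_ne_zero (hY : IsVertexOperatorMap Yw) {u v : V}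
    {w : W} (h : ∃ k l, HasIterateFormula A Yw u v w k l) (hu : Yw u (-1) w ≠ 0) :
    IsWeaklyAssociative A Yw u v w := by
  obtain ⟨k, l, h⟩ := h
  have hl : 0 ≤ l := by
    contrapose! hu
    exact h.trunc_left _ (by omega)
  lift l to ℕ using hl
  exact h.isWeaklyAssociative hY

/-- If `u₋₁ w = 0`, the order of truncation of `u` on `w` may be negative. Replacing `u` by `u + 1`
makes it nonnegative, because `(u + 1)₋₁ w = w`. -/
theorem isWeaklyAssociative_of_hasIterateFormula (hY : IsVertexOperatorMap Yw)
    (hvac : HasVacuumProperty A Yw)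
    (h : ∀ u v w, ∃ k l, HasIterateFormula A Yw u v w k l) (u v : V) (w : W) :
    IsWeaklyAssociative A Yw u v w := by
  rcases eq_or_ne w 0 with rfl | hw
  · exact ⟨0, fun p _ q r => jacobiDefect_zero_right A Yw u v p q r⟩
  rcases ne_or_eq (Yw u (-1) w) 0 with hu | hu
  · exact isWeaklyAssociative_of_apply_neg_one_ne_zero hY (h u v w) hu
  have hvac_ne : Yw A.vac (-1) w ≠ 0 := by rwa [hvac.neg_one]
  have hadd_ne : Yw (u + A.vac) (-1) w ≠ 0 := by
    rwa [hY.map_add, LinearMap.add_apply, hu, zero_add]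
  exact .of_add_left hY (isWeaklyAssociative_of_apply_neg_one_ne_zero hY (h _ v w) hadd_ne)
    (isWeaklyAssociative_of_apply_neg_one_ne_zero hY (h _ v w) hvac_ne)

end WeakAssociativity

section JacobiOfWeakAssociativity

variable {V W : Type*} [AddCommGroup V] [Module ℂ V] [AddCommGroup W] [Module ℂ W]
  {A : VertexAlgebra V} {Yw : V → ℤ → W →ₗ[ℂ] W}

theorem jacobiDefect_vac (hY : IsVertexOperatorMap Yw) (hvac : HasVacuumProperty A Yw) {u : V}
    {w : W} (hassoc : IsWeaklyAssociative A Yw u A.vac w) (p q r : ℤ) :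
    jacobiDefect A Yw u A.vac w p q r = 0 := by
  have commute (p q : ℤ) : jacobiDefect A Yw u A.vac w p q 0 = 0 := by
    rw [jacobiDefect, iterateCoeff_eq_zero hY (A.creation u), productCoeff, productCoeff,
      binomSum_zero_left, binomSum_zero_left]
    rcases eq_or_ne q (-1) with rfl | hq
    · simp [hvac.neg_one]
    · simp [hvac.of_ne q hq]
  obtain ⟨l, hl⟩ := hassoc
  have hrec := pascalRecurrence_jacobiDefect hY A u A.vac w
  exact hrec.eq_zero_of_fst_of_thd hl (hrec.eq_zero_of_thd_ge commute) p q r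

theorem iterateCoeff_vac (hY : IsVertexOperatorMap Yw) (hvac : HasVacuumProperty A Yw) {u : V}
    {w : W} (hassoc : IsWeaklyAssociative A Yw u A.vac w) (p r : ℤ) :
    iterateCoeff A Yw u A.vac w p 0 r = if r = -1 then Yw u p w else 0 := by
  rcases le_or_gt 0 r with hr | hr
  · rw [iterateCoeff_eq_zero hY fun n hn => A.creation u n (hr.trans hn), if_neg (by omega)]
  have h := jacobiDefect_vac hY hvac hassoc p 0 r
  rw [jacobiDefect, productCoeff_eq_zero fun n hn => by
    rw [hvac.of_ne n (by omega), LinearMap.zero_apply], zero_sub, sub_neg_eq_add] at h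
  rw [eq_neg_of_add_eq_zero_left h, productCoeff, binomSum_eq_head r fun i hi => by
    rw [hvac.of_ne _ (by omega), LinearMap.zero_apply, smul_zero]]
  split_ifs with hr_eq
  · subst hr_eq
    simp [hvac.neg_one]
  · simp [hvac.of_ne r hr_eq]

/-- The iterated derivative property `Y_W((1/j!) Dʲ u, x) = (1/j!) (d/dx)ʲ Y_W(u, x)`, where
`(1/j!) Dʲ u = u_{-1-j} 1`. -/
theorem apply_coeff_vac (hY : IsVertexOperatorMap Yw) (hvac : HasVacuumProperty A Yw) {u : V}
    {w : W} (hassoc : IsWeaklyAssociative A Yw u A.vac w) (j : ℕ) (m : ℤ) :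
    Yw (A.coeff u (-1 - j) A.vac) m w = ((-1 : ℂ) ^ j * gb m j) • Yw u (m - j) w := by
  have h := binomSum_alternating_binomSum m
    (hY.hasFiniteSupport_iterate A u A.vac w (-1 - j) fun i => m - i)
  have inner (n : ℕ) : binomSum (m - n) (fun i =>
      Yw (A.coeff u (-1 - j + (n + i : ℕ)) A.vac) (m - (n + i : ℕ)) w) =
      if n = j then Yw u (m - n) w else 0 := by
    have hvac_coeff := iterateCoeff_vac hY hvac hassoc (m - n) (-1 - j + n)
    simp only [iterateCoeff, add_zero] at hvac_coeff
    simp only [Nat.cast_add, ← add_assoc, ← sub_sub, hvac_coeff]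
    exact if_congr (by omega) rfl rfl
  simp only [inner, Nat.cast_zero, add_zero, sub_zero] at h
  rw [← h, binomSum, finsum_eq_single _ j fun n hn => by rw [if_neg hn, smul_zero, smul_zero],
    if_pos rfl, smul_smul, mul_comm]

/-- Skew symmetry `Y(v, x) u = e^{xD} Y(u, -x) v`. -/
theorem VertexAlgebra.coeff_skew (A : VertexAlgebra V) (u v : V) (r : ℤ) :
    A.coeff v r u = -((-1 : ℂ) ^ r • iterateCoeff A A.coeff u v A.vac (-1) 0 r) := by
  have h := A.jacobiDefect_coeff u v A.vac (-1) 0 r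
  rw [jacobiDefect, productCoeff_eq_zero (A.creation v), productCoeff_eq_comp fun n hn =>
    A.creation u n (by omega), A.create_neg_one, zero_add, zero_sub, sub_neg_eq_add] at h
  rw [eq_neg_of_add_eq_zero_left h, smul_neg, neg_neg, smul_smul, ← mul_zpow]
  simp

theorem apply_coeff_skew (hY : IsVertexOperatorMap Yw) (hvac : HasVacuumProperty A Yw) {w : W}
    (hassoc : ∀ u, IsWeaklyAssociative A Yw u A.vac w) (u v : V) (p r : ℤ) :
    Yw (A.coeff v r u) p w = -((-1 : ℂ) ^ r • iterateCoeff A Yw u v w p 0 r) := by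
  have hpush : hY.applyₗ p w (iterateCoeff A A.coeff u v A.vac (-1) 0 r) =
      iterateCoeff A Yw u v w p 0 r := by
    rw [iterateCoeff, map_binomSum _ _ (A.isVertexOperatorMap_coeff.hasFiniteSupport_iterate A ..)]
    refine finsum_congr fun i => ?_
    change gb (-1) i • Yw (A.coeff _ (-1 + 0 - i) A.vac) p w = _
    rw [add_zero, add_zero, apply_coeff_vac hY hvac (hassoc _), gb_neg_one, smul_smul, ← mul_assoc,
      ← mul_pow, neg_one_mul, neg_neg, one_pow, one_mul]
  change hY.applyₗ p w _ = _
  rw [A.coeff_skew, map_neg, map_smul, hpush]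

theorem iterateCoeff_skew (hY : IsVertexOperatorMap Yw) (hvac : HasVacuumProperty A Yw) {w : W}
    (hassoc : ∀ u, IsWeaklyAssociative A Yw u A.vac w) (u v : V) (p q r : ℤ) :
    iterateCoeff A Yw u v w p q r = -((-1 : ℂ) ^ r • iterateCoeff A Yw v u w q p r) := by
  have hrec := (pascalRecurrence_iterateCoeff hY A u v w).add
    (pascalRecurrence_iterateCoeff hY A v u w).alternating_swap_left
  obtain ⟨N, hN⟩ := A.trunc u v
  obtain ⟨N', hN'⟩ := A.trunc v u
  refine eq_neg_of_add_eq_zero_left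
    (hrec.eq_zero_of_thd_of_snd_zero (N := max N N') (fun r hr p q => ?_) (fun p r => ?_) p q r)
  · rw [iterateCoeff_eq_zero hY fun n hn => hN n (by omega),
      iterateCoeff_eq_zero hY fun n hn => hN' n (by omega), smul_zero, add_zero]
  · have h0 : iterateCoeff A Yw v u w 0 p r = Yw (A.coeff v r u) p w := by
      simp [iterateCoeff, binomSum_zero_left]
    rw [h0, apply_coeff_skew hY hvac hassoc, smul_neg, smul_smul, ← mul_zpow]
    simp

theorem jacobiDefect_skew (hY : IsVertexOperatorMap Yw) (hvac : HasVacuumProperty A Yw)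
    {w : W} (hassoc : ∀ u, IsWeaklyAssociative A Yw u A.vac w) (u v : V) (p q r : ℤ) :
    jacobiDefect A Yw u v w p q r = -((-1 : ℂ) ^ r • jacobiDefect A Yw v u w q p r) := by
  have hsq : (-1 : ℂ) ^ r * (-1) ^ r = 1 := by rw [← mul_zpow]; simp
  rw [jacobiDefect, jacobiDefect, iterateCoeff_skew hY hvac hassoc u v, smul_sub, smul_sub,
    smul_smul, hsq]
  module

theorem jacobiDefect_eq_zero (hY : IsVertexOperatorMap Yw) (hvac : HasVacuumProperty A Yw)
    (hassoc : ∀ u v w, IsWeaklyAssociative A Yw u v w) (u v : V) (w : W) (p q r : ℤ) :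
    jacobiDefect A Yw u v w p q r = 0 := by
  obtain ⟨l, hl⟩ := hassoc u v w
  obtain ⟨k, hk⟩ := hassoc v u w
  refine (pascalRecurrence_jacobiDefect hY A u v w).eq_zero_of_fst_of_snd hl (k := k) ?_ p q r
  intro q hq p r
  rw [jacobiDefect_skew hY hvac fun u => hassoc u A.vac w, hk q hq, smul_zero, neg_zero]

theorem isWeakModule_of_isWeaklyAssociative (hY : IsVertexOperatorMap Yw)
    (hvac : HasVacuumProperty A Yw) (hassoc : ∀ u v w, IsWeaklyAssociative A Yw u v w) :
    IsWeakModule A Yw :=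
  ⟨hY.map_add, hY.map_smul, hY.trunc, hvac.neg_one, hvac.of_ne, fun u v w p q r =>
    (jacobiDefect_eq_zero_iff hY u v w p q r).1 (jacobiDefect_eq_zero hY hvac hassoc u v w p q r)⟩

end JacobiOfWeakAssociativity

theorem statement5_general {V W : Type*} [AddCommGroup V] [Module ℂ V] [AddCommGroup W]
    [Module ℂ W] (A : VertexAlgebra V) (Yw : V → ℤ → W →ₗ[ℂ] W)
    (hadd : ∀ (u v : V) (n : ℤ), Yw (u + v) n = Yw u n + Yw v n)
    (hsmul : ∀ (c : ℂ) (u : V) (n : ℤ), Yw (c • u) n = c • Yw u n)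
    (hvac : HasVacuumProperty A Yw)
    (hiterate : ∀ (u v : V) (w : W), ∃ k l : ℤ, HasIterateFormula A Yw u v w k l) :
    IsWeakModule A Yw := by
  have hY : IsVertexOperatorMap Yw := ⟨hadd, hsmul, fun u w =>
    let ⟨_, l, h⟩ := hiterate u u w
    ⟨l, h.trunc_left⟩⟩
  exact isWeakModule_of_isWeaklyAssociative hY hvac
    (isWeaklyAssociative_of_hasIterateFormula hY hvac hiterate)

/-- Theorem 3.2: let `V` be a ℤ-graded vertex algebra, `W = ⨁_{n∈ℕ} W_(n)`
an ℕ-graded vector space, and `Yw` the coefficients of a linear map `V ⊗ W → W((x))`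
such that `u_n : W_(k) → W_(k+m-n-1)` for `u ∈ V_(m)` and `Y_W(1,x) = id_W`.
If for all `u, v, w` there exist `k, l` with the truncation properties such that the
iterate formula (for `q < k`) and the residue vanishing (for `i ≥ k - q`) hold, then
`(W, Y_W)` is an ℕ-gradable weak `V`-module; in particular `Y_W` satisfies the
(Borcherds–)Jacobi identity. -/
theorem statement5 {V W : Type*} [AddCommGroup V] [Module ℂ V]
    [AddCommGroup W] [Module ℂ W] (A : GradedVA V)
    (Yw : V → ℤ → W →ₗ[ℂ] W) (wgr : ℤ → Submodule ℂ W)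
    (hinternal : DirectSum.IsInternal wgr)
    (hnonneg : ∀ n : ℤ, n < 0 → wgr n = ⊥)
    (hgrade : ∀ {m : ℤ} {u : V}, u ∈ A.gr m → ∀ (n : ℤ) {k : ℤ} {w : W}, w ∈ wgr k →
      Yw u n w ∈ wgr (k + m - n - 1))
    (hadd : ∀ (u v : V) (n : ℤ), Yw (u + v) n = Yw u n + Yw v n)
    (hsmul : ∀ (c : ℂ) (u : V) (n : ℤ), Yw (c • u) n = c • Yw u n)
    (hvac1 : ∀ w : W, Yw A.vac (-1) w = w)
    (hvac2 : ∀ n : ℤ, n ≠ -1 → Yw A.vac n = 0)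
    (hmain : ∀ (u v : V) (w : W), ∃ k l : ℤ,
      (∀ n : ℤ, k ≤ n → Yw v n w = 0) ∧ (∀ n : ℤ, l ≤ n → Yw u n w = 0) ∧
      (∀ p q : ℤ, q < k →
        Yw u p (Yw v q w) =
          ∑ i ∈ Finset.range (k - q).toNat, ∑ j ∈ Finset.range (l.toNat + 1),
            (gb (p - l) i * gb l j) •
              Yw (A.coeff u (p - l - i + j) v) (q + l + i - j) w) ∧
      (∀ p q i : ℤ, k - q ≤ i →
        ∑ j ∈ Finset.range (l.toNat + 1),
          gb l j • Yw (A.coeff u (p - i - j) v) (q + i + j) w = 0)) :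
    IsWeakModule A.toVertexAlgebra Yw ∧ IsNNGradedModule A Yw wgr := by
  refine ⟨statement5_general A.toVertexAlgebra Yw hadd hsmul ⟨hvac1, hvac2⟩ fun u v w => ?_,
    hinternal, hnonneg, hgrade⟩
  obtain ⟨k, l, hv, hu, hcomp, hres⟩ := hmain u v w
  exact ⟨k, l, hv, hu, hcomp, hres⟩
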